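/- Let a ∈ ℤ^n with a ≥ 0, let a_0 := Σ_{i=1}^n a_i, and let A be the (n+1)×(n+2) integer matrix whose first n+1 columns form the identity matrix I_{n+1} and whose last column is (a_0, −2a_1, …, −2a_n)ᵀ. Then the Graver basis of A equals {±(−a_0, 2a_1, …, 2a_n, 1)} ⊂ ℤ^{n+2}. -/

import Mathlib

/-- The conformal order on `ℤ^N`: `x ⊑ y` iff for every coordinate `i`,
`x i * y i ≥ 0` and `|x i| ≤ |y i|`. -/
def Conf {N : ℕ} (x y : Fin N → ℤ) : Prop :=
  ∀ i, 0 ≤ x i * y i ∧ |x i| ≤ |y i|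

/-- The Graver basis of an integer matrix `A`: the set of `⊑`-minimal
elements of `{x : Ax = 0, x ≠ 0}`. -/
def GraverBasis {M N : ℕ} (A : Matrix (Fin M) (Fin N) ℤ) : Set (Fin N → ℤ) :=
  {x | (A.mulVec x = 0 ∧ x ≠ 0) ∧
    ∀ y, (A.mulVec y = 0 ∧ y ≠ 0) → Conf y x → y = x}

/-- The `(n+1) × (n+2)` matrix `A = (I_{n+1} | (a₀, -2a)ᵀ)`: its first `n+1`
columns are the identity and its last column is `(a₀, -2a₁, …, -2aₙ)ᵀ`. -/
def gadgetMatrix (n : ℕ) (a : Fin n → ℤ) : Matrix (Fin (n + 1)) (Fin (n + 2)) ℤ :=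
  Matrix.of fun i =>
    Fin.snoc (fun j : Fin (n + 1) => if i = j then 1 else 0)
      ((Fin.cons (∑ k, a k) (fun k => -2 * a k) : Fin (n + 1) → ℤ) i)

/-!
The kernel of `(I | c)` is the line spanned by `(-c, 1)`. On a line `ℤ ∙ g` with `g ≠ 0` the
conformal order compares `s • g` and `t • g` exactly as it compares the integers `s` and `t`, and
the minimal nonzero integers are `1` and `-1`.
-/

theorem mulVec_eq_zero_iff_exists_smul_eq {R ι κ : Type*} [CommSemiring R] [Fintype κ]
    {A : Matrix ι κ R} {g : κ → R} (hker : LinearMap.ker A.mulVecLin = Submodule.span R {g})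
    {x : κ → R} : A.mulVec x = 0 ↔ ∃ t : R, t • g = x := by
  rw [← Submodule.mem_span_singleton, ← hker, LinearMap.mem_ker, Matrix.mulVecLin_apply]

section ConformalOrder

variable {M N : ℕ} {A : Matrix (Fin M) (Fin N) ℤ} {g : Fin N → ℤ}

theorem conf_smul_smul_iff (hg : g ≠ 0) {s t : ℤ} :
    Conf (s • g) (t • g) ↔ 0 ≤ s * t ∧ |s| ≤ |t| := by
  simp only [Conf, Pi.smul_apply, smul_eq_mul, abs_mul, mul_mul_mul_comm]
  constructor
  · intro h
    obtain ⟨i, hi⟩ := Function.ne_iff.mp hg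
    exact ⟨nonneg_of_mul_nonneg_left (h i).1 (mul_self_pos.mpr hi),
      le_of_mul_le_mul_right (h i).2 (abs_pos.mpr hi)⟩
  · rintro ⟨hsign, habs⟩ i
    exact ⟨mul_nonneg hsign (mul_self_nonneg _), mul_le_mul_of_nonneg_right habs (abs_nonneg _)⟩

theorem smul_mem_graverBasis_iff (hg : g ≠ 0)
    (hker : LinearMap.ker A.mulVecLin = Submodule.span ℤ {g}) {t : ℤ} :
    t • g ∈ GraverBasis A ↔ IsUnit t := by
  have smul_mem_ker (s : ℤ) : A.mulVec (s • g) = 0 :=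
    (mulVec_eq_zero_iff_exists_smul_eq hker).mpr ⟨s, rfl⟩
  constructor
  · rintro ⟨⟨-, htg⟩, hmin⟩
    have ht : t ≠ 0 := left_ne_zero_of_smul htg
    have hsign : t.sign ≠ 0 := Int.sign_eq_zero_iff_zero.not.mpr ht
    have hconf : Conf (t.sign • g) (t • g) := by
      rw [conf_smul_smul_iff hg, Int.sign_mul_self_eq_abs, Int.abs_sign_of_ne_zero ht]
      exact ⟨abs_nonneg t, Int.one_le_abs ht⟩
    have hsign_eq : t.sign = t := smul_left_injective ℤ hg <|
      hmin _ ⟨smul_mem_ker _, smul_ne_zero hsign hg⟩ hconf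
    rw [Int.isUnit_iff_abs_eq, ← hsign_eq, Int.abs_sign_of_ne_zero ht]
  · intro ht
    refine ⟨⟨smul_mem_ker t, smul_ne_zero ht.ne_zero hg⟩, ?_⟩
    rintro y ⟨hy, hy0⟩ hconf
    obtain ⟨s, rfl⟩ := (mulVec_eq_zero_iff_exists_smul_eq hker).mp hy
    have hs : s ≠ 0 := left_ne_zero_of_smul hy0
    rw [conf_smul_smul_iff hg] at hconf
    have hst : s = t := by
      rcases Int.isUnit_iff.mp ht with rfl | rfl <;> grind
    rw [hst]

theorem graverBasis_eq_pair_of_ker_eq_span_singleton (hg : g ≠ 0)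
    (hker : LinearMap.ker A.mulVecLin = Submodule.span ℤ {g}) :
    GraverBasis A = {g, -g} := by
  ext x
  rw [Set.mem_insert_iff, Set.mem_singleton_iff]
  constructor
  · intro hx
    obtain ⟨t, rfl⟩ := (mulVec_eq_zero_iff_exists_smul_eq hker).mp hx.1.1
    rcases Int.isUnit_iff.mp ((smul_mem_graverBasis_iff hg hker).mp hx) with rfl | rfl
    · exact .inl (one_smul ℤ g)
    · exact .inr (neg_one_smul ℤ g)
  · rintro (rfl | rfl)
    · simpa only [one_smul] using (smul_mem_graverBasis_iff hg hker).mpr isUnit_one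
    · simpa only [neg_one_smul] using (smul_mem_graverBasis_iff hg hker).mpr isUnit_one.neg

end ConformalOrder

section IdentityAppendCol

variable {R : Type*} [CommRing R] {m : ℕ}

/-- The block matrix `(I | c)`, with columns indexed by `Fin (m + 1)` and `c` as the last one. -/
def identityAppendCol (c : Fin m → R) : Matrix (Fin m) (Fin (m + 1)) R :=
  Matrix.of fun i => Fin.snoc ((1 : Matrix (Fin m) (Fin m) R) i) (c i)

theorem identityAppendCol_mulVec (c : Fin m → R) (x : Fin (m + 1) → R) :
    (identityAppendCol c).mulVec x = Fin.init x + x (Fin.last m) • c := by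
  ext i
  simp [identityAppendCol, Matrix.mulVec, dotProduct, Fin.sum_univ_castSucc, Matrix.one_apply,
    Fin.init, mul_comm]

theorem ker_mulVecLin_identityAppendCol (c : Fin m → R) :
    LinearMap.ker (identityAppendCol c).mulVecLin =
      Submodule.span R {(Fin.snoc (-c) 1 : Fin (m + 1) → R)} := by
  ext x
  rw [LinearMap.mem_ker, Matrix.mulVecLin_apply, identityAppendCol_mulVec,
    Submodule.mem_span_singleton]
  constructor
  · intro hx
    refine ⟨x (Fin.last m), funext <| Fin.lastCases (by simp) fun i => ?_⟩
    simpa [Fin.init] using (eq_neg_of_add_eq_zero_left (congrFun hx i)).symm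
  · rintro ⟨t, rfl⟩
    ext i
    simp [Fin.init]

end IdentityAppendCol

theorem graverBasis_identityAppendCol {m : ℕ} (c : Fin m → ℤ) :
    GraverBasis (identityAppendCol c) = {Fin.snoc (-c) 1, -Fin.snoc (-c) 1} := by
  have hne : (Fin.snoc (-c) 1 : Fin (m + 1) → ℤ) ≠ 0 :=
    Function.ne_iff.mpr ⟨Fin.last m, by simp⟩
  exact graverBasis_eq_pair_of_ker_eq_span_singleton hne (ker_mulVecLin_identityAppendCol c)

theorem gadgetMatrix_eq_identityAppendCol (n : ℕ) (a : Fin n → ℤ) :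
    gadgetMatrix n a = identityAppendCol (Fin.cons (∑ k, a k) fun k => -2 * a k) :=
  rfl

theorem graverBasis_gadgetMatrix_general (n : ℕ) (a : Fin n → ℤ) :
    GraverBasis (gadgetMatrix n a) =
      {Fin.snoc (Fin.cons (-(∑ k, a k)) (fun k => 2 * a k)) 1,
        -Fin.snoc (Fin.cons (-(∑ k, a k)) (fun k => 2 * a k)) 1} := by
  have hneg : -(Fin.cons (∑ k, a k) fun k => -2 * a k : Fin (n + 1) → ℤ) =
      Fin.cons (-(∑ k, a k)) fun k => 2 * a k :=
    funext <| Fin.cases (by simp) (by simp)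
  rw [gadgetMatrix_eq_identityAppendCol, graverBasis_identityAppendCol, hneg]

/-- For `a ≥ 0`, the Graver basis of `A = (I_{n+1} | (a₀, -2a)ᵀ)` is
`{±(-a₀, 2a₁, …, 2aₙ, 1)}`. -/
theorem graverBasis_gadgetMatrix (n : ℕ) (a : Fin n → ℤ) (ha : ∀ i, 0 ≤ a i) :
    GraverBasis (gadgetMatrix n a) =
      {Fin.snoc (Fin.cons (-(∑ k, a k)) (fun k => 2 * a k)) 1,
        -Fin.snoc (Fin.cons (-(∑ k, a k)) (fun k => 2 * a k)) 1} :=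
  graverBasis_gadgetMatrix_general n a
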